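/- Let γ ∈ (0, 1) and β ≥ 0, and define the shifted sigmoid loss φ_β(α) := 1/(1 + exp(α − β)). Then φ_β is (φ_γ, [−1, 1])-calibrated if and only if β > 0. -/

import Mathlib

/-- Class-conditional risk of a margin-based loss `φ`:
`C_φ(α, η) = η φ(α) + (1 - η) φ(-α)`. -/
noncomputable def ccr (φ : ℝ → ℝ) (α η : ℝ) : ℝ := η * φ α + (1 - η) * φ (-α)

/-- Minimal class-conditional risk over a set `A` of achievable prediction values. -/
noncomputable def ccrStar (φ : ℝ → ℝ) (A : Set ℝ) (η : ℝ) : ℝ :=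
  sInf ((fun α => ccr φ α η) '' A)

/-- Excess class-conditional risk. -/
noncomputable def ccrExcess (φ : ℝ → ℝ) (A : Set ℝ) (α η : ℝ) : ℝ :=
  ccr φ α η - ccrStar φ A η

/-- `φ` is `(ψ, A)`-calibrated. -/
def Calibrated (φ ψ : ℝ → ℝ) (A : Set ℝ) : Prop :=
  ∀ ε > (0:ℝ), ∃ δ > (0:ℝ), ∀ η ∈ Set.Icc (0:ℝ) 1, ∀ α ∈ A,
    ccr φ α η < ccrStar φ A η + δ → ccr ψ α η < ccrStar ψ A η + ε

/-- The `γ`-robust 0-1 loss `φ_γ(α) = 1{α ≤ γ}` (the 0-1 loss is the case `γ = 0`). -/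
noncomputable def robustLoss (γ : ℝ) (α : ℝ) : ℝ := if α ≤ γ then 1 else 0

/-- Quasiconcavity of a real function on ℝ. -/
def QuasiconcaveFn (h : ℝ → ℝ) : Prop :=
  ∀ α₁ α₂ l : ℝ, 0 ≤ l → l ≤ 1 → min (h α₁) (h α₂) ≤ h (l * α₁ + (1 - l) * α₂)

/-- `φ` is quasiconcave even if its even part `α ↦ φ(α) + φ(-α)` is quasiconcave. -/
def QuasiconcaveEven (φ : ℝ → ℝ) : Prop := QuasiconcaveFn (fun α => φ α + φ (-α))

theorem ccr_nonneg {φ : ℝ → ℝ} (hφ : ∀ α, 0 ≤ φ α) (α : ℝ) {η : ℝ}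
    (hη : η ∈ Set.Icc (0:ℝ) 1) : 0 ≤ ccr φ α η :=
  add_nonneg (mul_nonneg hη.1 (hφ _)) (mul_nonneg (sub_nonneg.2 hη.2) (hφ _))

theorem ccrStar_le_ccr {φ : ℝ → ℝ} (hφ : ∀ α, 0 ≤ φ α) {A : Set ℝ} {α : ℝ} (hα : α ∈ A)
    {η : ℝ} (hη : η ∈ Set.Icc (0:ℝ) 1) : ccrStar φ A η ≤ ccr φ α η := by
  refine csInf_le ⟨0, ?_⟩ ⟨α, hα, rfl⟩
  rintro _ ⟨x, -, rfl⟩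
  exact ccr_nonneg hφ x hη

theorem le_ccrStar {φ : ℝ → ℝ} {A : Set ℝ} (hA : A.Nonempty) {η c : ℝ}
    (h : ∀ α ∈ A, c ≤ ccr φ α η) : c ≤ ccrStar φ A η := by
  refine le_csInf (hA.image _) ?_
  rintro _ ⟨x, hx, rfl⟩
  exact h x hx

theorem robustLoss_nonneg (γ α : ℝ) : 0 ≤ robustLoss γ α := by
  unfold robustLoss
  split_ifs <;> norm_num

theorem ccr_robustLoss_of_lt {γ α : ℝ} (hγ : 0 < γ) (h : γ < α) (η : ℝ) :
    ccr (robustLoss γ) α η = 1 - η := by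
  simp [ccr, robustLoss, not_le.2 h, show -α ≤ γ by linarith]

theorem ccr_robustLoss_of_lt_neg {γ α : ℝ} (hγ : 0 < γ) (h : α < -γ) (η : ℝ) :
    ccr (robustLoss γ) α η = η := by
  simp [ccr, robustLoss, show α ≤ γ by linarith, show ¬ -α ≤ γ by linarith]

theorem ccr_robustLoss_of_abs_le {γ α : ℝ} (h : |α| ≤ γ) (η : ℝ) :
    ccr (robustLoss γ) α η = 1 := by
  simp [ccr, robustLoss, (abs_le.1 h).2, show -α ≤ γ by linarith [(abs_le.1 h).1]]

theorem min_le_ccr_robustLoss {γ : ℝ} (hγ : 0 < γ) (α : ℝ) {η : ℝ}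
    (hη : η ∈ Set.Icc (0:ℝ) 1) : min η (1 - η) ≤ ccr (robustLoss γ) α η := by
  rcases lt_or_ge γ α with h | h
  · rw [ccr_robustLoss_of_lt hγ h]
    exact min_le_right _ _
  rcases lt_or_ge α (-γ) with h' | h'
  · rw [ccr_robustLoss_of_lt_neg hγ h']
    exact min_le_left _ _
  · rw [ccr_robustLoss_of_abs_le (abs_le.2 ⟨h', h⟩)]
    exact (min_le_left _ _).trans hη.2

/-- An antitone loss whose even part is minimized over `[-1, 1]` at the endpoints, strictly better
than anywhere on `[-γ, γ]`, is calibrated with respect to the `γ`-robust 0-1 loss. -/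
theorem calibrated_robustLoss_of_even_part {φ : ℝ → ℝ} (hφ : ∀ α, 0 ≤ φ α) (hanti : Antitone φ)
    (hφ1 : φ 1 < φ (-1)) {γ : ℝ} (hγ : 0 < γ) {m : ℝ} (hm : 0 < m)
    (hle : ∀ α ∈ Set.Icc (-1:ℝ) 1, φ 1 + φ (-1) ≤ φ α + φ (-α))
    (hgap : ∀ α, |α| ≤ γ → φ 1 + φ (-1) + m ≤ φ α + φ (-α)) :
    Calibrated φ (robustLoss γ) (Set.Icc (-1:ℝ) 1) := by
  intro ε hε
  have hd : 0 < φ (-1) - φ 1 := sub_pos.2 hφ1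
  refine ⟨min (m / 2) (ε / 2 * (φ (-1) - φ 1)), lt_min (by positivity) (by positivity), ?_⟩
  intro η hη α hα hlt
  by_contra! hbad
  have hone := ccrStar_le_ccr hφ (Set.right_mem_Icc.2 (by norm_num : (-1:ℝ) ≤ 1)) hη
  have hneg := ccrStar_le_ccr hφ (Set.left_mem_Icc.2 (by norm_num : (-1:ℝ) ≤ 1)) hη
  have hmin : min η (1 - η) ≤ ccrStar (robustLoss γ) (Set.Icc (-1) 1) η :=
    le_ccrStar ⟨1, by norm_num⟩ fun α _ => min_le_ccr_robustLoss hγ α hη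
  have hδm := min_le_left (m / 2) (ε / 2 * (φ (-1) - φ 1))
  have hδε := min_le_right (m / 2) (ε / 2 * (φ (-1) - φ 1))
  have hS := hle α hα
  simp only [ccr, neg_neg] at hlt hone hneg
  rcases lt_or_ge γ α with h | h
  · rw [ccr_robustLoss_of_lt hγ h] at hbad
    have hη' : ε ≤ 1 - 2 * η := by
      rcases min_choice η (1 - η) with h' | h' <;> linarith
    have hD : φ α ≤ φ (-α) := hanti (by linarith)
    nlinarith [mul_le_mul_of_nonneg_right hη' hd.le,
      mul_nonneg (hε.le.trans hη') (sub_nonneg.2 hD)]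
  rcases lt_or_ge α (-γ) with h' | h'
  · rw [ccr_robustLoss_of_lt_neg hγ h'] at hbad
    have hη' : ε ≤ 2 * η - 1 := by
      rcases min_choice η (1 - η) with h' | h' <;> linarith
    have hD : φ (-α) ≤ φ α := hanti (by linarith)
    nlinarith [mul_le_mul_of_nonneg_right hη' hd.le,
      mul_nonneg (hε.le.trans hη') (sub_nonneg.2 hD)]
  · have hG := hgap α (abs_le.2 ⟨h', h⟩)
    have h1 : φ 1 ≤ φ α := hanti hα.2
    have h2 : φ 1 ≤ φ (-α) := hanti (by linarith [hα.1])
    have h3 : φ α ≤ φ (-1) := hanti hα.1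
    have h4 : φ (-α) ≤ φ (-1) := hanti (by linarith [hα.2])
    rcases le_total (1 / 2) η with hη' | hη'
    · nlinarith [mul_nonneg (by linarith : 0 ≤ 2 * η - 1)
        (by linarith : 0 ≤ (φ α - φ (-α)) - (φ 1 - φ (-1)))]
    · nlinarith [mul_nonneg (by linarith : 0 ≤ 1 - 2 * η)
        (by linarith : 0 ≤ (φ (-1) - φ 1) - (φ α - φ (-α)))]

theorem shifted_sigmoid_add_neg (β α : ℝ) :
    1 / (1 + Real.exp (α - β)) + 1 / (1 + Real.exp (-α - β)) =
      1 + (Real.exp β ^ 2 - 1) / (2 * Real.exp β * Real.cosh α + Real.exp β ^ 2 + 1) := by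
  have hx := Real.exp_pos α
  have hb := Real.exp_pos β
  rw [Real.cosh_eq, Real.exp_sub, Real.exp_sub, Real.exp_neg]
  have h : 0 < 2 * Real.exp β * ((Real.exp α + (Real.exp α)⁻¹) / 2) + Real.exp β ^ 2 + 1 := by
    positivity
  generalize Real.exp α = x at *
  generalize Real.exp β = b at *
  field_simp
  ring

theorem shifted_sigmoid_strictAnti (β : ℝ) :
    StrictAnti fun α : ℝ => 1 / (1 + Real.exp (α - β)) := fun x y hxy =>
  one_div_lt_one_div_of_lt (by positivity) (by gcongr)

/-- The shifted sigmoid loss is `(φ_γ, [-1,1])`-calibrated iff `β > 0`. -/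
theorem sigmoid_calibrated_iff
    (γ : ℝ) (hγ : γ ∈ Set.Ioo (0:ℝ) 1) (β : ℝ) (hβ : 0 ≤ β) :
    Calibrated (fun α => 1 / (1 + Real.exp (α - β))) (robustLoss γ)
        (Set.Icc (-1:ℝ) 1) ↔ 0 < β := by
  have half_mem : (1 / 2 : ℝ) ∈ Set.Icc (0:ℝ) 1 := by norm_num
  constructor
  · intro hcal
    refine hβ.lt_of_ne' ?_
    rintro rfl
    obtain ⟨δ, hδ, h⟩ := hcal (1 / 2) (by norm_num)
    have hconst : ∀ α, ccr (fun α => 1 / (1 + Real.exp (α - 0))) α (1 / 2) = 1 / 2 := by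
      intro α
      have hsum := shifted_sigmoid_add_neg 0 α
      simp only [Real.exp_zero, one_pow, sub_self, zero_div, add_zero] at hsum
      simp only [ccr]
      linarith
    have hφ : (1 / 2 : ℝ) ≤
        ccrStar (fun α => 1 / (1 + Real.exp (α - 0))) (Set.Icc (-1) 1) (1 / 2) :=
      le_ccrStar ⟨1, by norm_num⟩ fun α _ => (hconst α).ge
    have hψ := ccrStar_le_ccr (robustLoss_nonneg γ)
      (Set.right_mem_Icc.2 (by norm_num : (-1:ℝ) ≤ 1)) half_mem
    have hzero := h (1 / 2) half_mem 0 (by norm_num) (by rw [hconst]; linarith)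
    rw [ccr_robustLoss_of_lt hγ.1 hγ.2] at hψ
    rw [ccr_robustLoss_of_abs_le (by simpa using hγ.1.le)] at hzero
    linarith
  · intro hpos
    have hanti := shifted_sigmoid_strictAnti β
    have hb : 0 < Real.exp β ^ 2 - 1 := by
      nlinarith [Real.one_lt_exp_iff.2 hpos]
    have hmono : ∀ x y : ℝ, |x| ≤ |y| →
        1 / (1 + Real.exp (y - β)) + 1 / (1 + Real.exp (-y - β)) ≤
          1 / (1 + Real.exp (x - β)) + 1 / (1 + Real.exp (-x - β)) := by
      intro x y hxy
      have := Real.cosh_le_cosh.2 hxy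
      have := Real.cosh_pos x
      rw [shifted_sigmoid_add_neg, shifted_sigmoid_add_neg]
      gcongr
    have hgap : 1 / (1 + Real.exp (1 - β)) + 1 / (1 + Real.exp (-1 - β)) <
        1 / (1 + Real.exp (γ - β)) + 1 / (1 + Real.exp (-γ - β)) := by
      have : Real.cosh γ < Real.cosh 1 := by
        rw [Real.cosh_lt_cosh, abs_of_pos hγ.1, abs_one]
        exact hγ.2
      have := Real.cosh_pos γ
      rw [shifted_sigmoid_add_neg, shifted_sigmoid_add_neg]
      gcongr
    refine calibrated_robustLoss_of_even_part (fun α => by positivity) hanti.antitone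
      (hanti (by norm_num)) hγ.1 (sub_pos.2 hgap) ?_ ?_
    · intro α hα
      exact hmono α 1 (by rw [abs_one]; exact abs_le.2 hα)
    · intro α hα
      have := hmono α γ (by rwa [abs_of_pos hγ.1])
      linarith
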